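/- Let H > 0 and f : ℝ → ℝ be continuous with f(0) = 0 and F(s) = ∫₀ˢ f(σ) dσ ≥ 0 for all s ∈ ℝ. Let φ : [0,∞)×ℝ³ → ℝ be a global C² solution of ∂ₜ²φ + 3H∂ₜφ − e^{−2Ht}Δφ + f(φ) = 0 which is radial in x and such that for each t the function x ↦ φ(t,x) is compactly supported. Then the energy decays to zero outside the forward light cone: for every b > 1, lim_{t→∞} ∫_{{x ∈ ℝ³ : |x| > (1+b)t}} ( (∂ₜφ(t,x))²/2 + |∇ₓφ(t,x)|²/(2e^{2Ht}) + F(φ(t,x)) ) dx = 0. -/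

import Mathlib

open MeasureTheory Filter

noncomputable section

/-- Euclidean space `ℝ³`. -/
abbrev E3 : Type := EuclideanSpace ℝ (Fin 3)

/-- The Laplacian of a function on `ℝ³`, as the sum of second partial derivatives. -/
def lap (u : E3 → ℝ) (x : E3) : ℝ :=
  ∑ i : Fin 3,
    fderiv ℝ (fun y => fderiv ℝ u y (EuclideanSpace.single i 1)) x (EuclideanSpace.single i 1)

/-- First time derivative `∂ₜφ`. -/
def dt1 (φ : ℝ → E3 → ℝ) (t : ℝ) (x : E3) : ℝ := deriv (fun s => φ s x) t

/-- Second time derivative `∂ₜ²φ`. -/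
def dt2 (φ : ℝ → E3 → ℝ) (t : ℝ) (x : E3) : ℝ := deriv (fun s => dt1 φ s x) t

/-- The potential `F(s) = ∫₀ˢ f(σ) dσ`. -/
def pot (f : ℝ → ℝ) (s : ℝ) : ℝ := ∫ σ in (0:ℝ)..s, f σ

/-- Standard basis vectors. -/
abbrev bv (i : Fin 3) : E3 := EuclideanSpace.single i 1

lemma hasDerivAt_slice {g : ℝ × E3 → ℝ} (hg : ContDiff ℝ 1 g) (t : ℝ) (x : E3) :
    HasDerivAt (fun s => g (s, x)) (fderiv ℝ g (t, x) (1, 0)) t := by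
  have h1 : HasFDerivAt g (fderiv ℝ g (t, x)) (t, x) :=
    ((hg.differentiable one_ne_zero) _).hasFDerivAt
  have h2 : HasDerivAt (fun s : ℝ => (s, x)) ((1 : ℝ), (0 : E3)) t :=
    (hasDerivAt_id t).prodMk (hasDerivAt_const t x)
  exact h1.comp_hasDerivAt t h2

lemma hasFDerivAt_slice {g : ℝ × E3 → ℝ} (hg : ContDiff ℝ 1 g) (t : ℝ) (x : E3) :
    HasFDerivAt (fun y => g (t, y))
      ((fderiv ℝ g (t, x)).comp (ContinuousLinearMap.inr ℝ ℝ E3)) x := by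
  have h1 : HasFDerivAt g (fderiv ℝ g (t, x)) (t, x) :=
    ((hg.differentiable one_ne_zero) _).hasFDerivAt
  exact h1.comp x (hasFDerivAt_prodMk_right t x)

lemma fderiv_slice {g : ℝ × E3 → ℝ} (hg : ContDiff ℝ 1 g) (t : ℝ) (x v : E3) :
    fderiv ℝ (fun y => g (t, y)) x v = fderiv ℝ g (t, x) (0, v) := by
  rw [(hasFDerivAt_slice hg t x).fderiv]; simp

lemma integral_deriv_zero {W : E3 → ℝ} (hW : ContDiff ℝ 1 W) (hs : HasCompactSupport W) (v : E3) :
    ∫ x, fderiv ℝ W x v = 0 := by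
  have h1 : Integrable (fun x => fderiv ℝ W x v) := by
    apply Continuous.integrable_of_hasCompactSupport
    · exact (hW.continuous_fderiv one_ne_zero).clm_apply continuous_const
    · exact hs.fderiv_apply (𝕜 := ℝ) v
  have h2 : Integrable W := hW.continuous.integrable_of_hasCompactSupport hs
  have := integral_mul_fderiv_eq_neg_fderiv_mul_of_integrable (μ := (volume : Measure E3))
    (f := fun _ => (1 : ℝ)) (g := W) (v := v) (by simp) (by simpa using h1) (by simpa using h2)
    (fun x _ => differentiableAt_const _) (fun x _ => hW.differentiable one_ne_zero x)
  simpa using this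

lemma hasDerivAt_param {g : ℝ × E3 → ℝ} (hg : ContDiff ℝ 1 g) {K : Set E3} (hK : IsCompact K)
    (t : ℝ) (h0 : ∀ s ∈ Set.Ioo (t - 1) (t + 1), ∀ x ∉ K, g (s, x) = 0) :
    Integrable (fun x => fderiv ℝ g (t, x) (1, 0)) ∧
    HasDerivAt (fun s => ∫ x, g (s, x)) (∫ x, fderiv ℝ g (t, x) (1, 0)) t := by
  have hc : Continuous (fun z => fderiv ℝ g z (1, 0)) :=
    (hg.continuous_fderiv one_ne_zero).clm_apply continuous_const
  obtain ⟨C, hC⟩ := (isCompact_Icc (a := t - 1) (b := t + 1)).prod hK |>.exists_bound_of_continuousOn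
    hc.continuousOn
  have ht : t ∈ Set.Ioo (t - 1) (t + 1) := by constructor <;> linarith
  refine hasDerivAt_integral_of_dominated_loc_of_deriv_le (μ := (volume : Measure E3))
    (F := fun s x => g (s, x)) (F' := fun s x => fderiv ℝ g (s, x) (1, 0))
    (bound := K.indicator (fun _ => C))
    (s := Set.Ioo (t - 1) (t + 1)) (Ioo_mem_nhds ht.1 ht.2) ?_ ?_ ?_ ?_ ?_ ?_
  · exact Eventually.of_forall fun s =>
      (hg.continuous.comp (by fun_prop : Continuous fun x : E3 => (s, x))).aestronglyMeasurable
  · apply Continuous.integrable_of_hasCompactSupport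
    · exact hg.continuous.comp (by fun_prop : Continuous fun x : E3 => (t, x))
    · exact HasCompactSupport.intro hK (fun x hx => h0 t ht x hx)
  · exact (hc.comp (by fun_prop : Continuous fun x : E3 => (t, x))).aestronglyMeasurable
  · refine Eventually.of_forall fun x s hs => ?_
    by_cases hx : x ∈ K
    · rw [Set.indicator_of_mem hx]
      exact hC (s, x) ⟨⟨hs.1.le, hs.2.le⟩, hx⟩
    · rw [Set.indicator_of_notMem hx]
      have h1 := hasDerivAt_slice hg s x
      have h2 : HasDerivAt (fun s => g (s, x)) 0 s := by
        refine (hasDerivAt_const s (0 : ℝ)).congr_of_eventuallyEq ?_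
        filter_upwards [Ioo_mem_nhds hs.1 hs.2] with r hr using h0 r hr x hx
      rw [h1.unique h2]; simp
  · exact (integrable_indicator_iff hK.measurableSet).2 (integrableOn_const hK.measure_lt_top.ne)
  · exact Eventually.of_forall fun x s hs => hasDerivAt_slice hg s x

lemma hasDerivAt_pot {f : ℝ → ℝ} (hf : Continuous f) (s : ℝ) : HasDerivAt (pot f) (f s) s :=
  intervalIntegral.integral_hasDerivAt_right (hf.intervalIntegrable _ _)
    (hf.stronglyMeasurableAtFilter _ _) hf.continuousAt

lemma contDiff_pot {f : ℝ → ℝ} (hf : Continuous f) : ContDiff ℝ 1 (pot f) := by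
  rw [contDiff_one_iff_deriv]
  refine ⟨fun s => (hasDerivAt_pot hf s).differentiableAt, ?_⟩
  have : deriv (pot f) = f := funext fun s => (hasDerivAt_pot hf s).deriv
  rwa [this]

/-- Time derivative on space-time. -/
def QQ (Φ : ℝ × E3 → ℝ) (z : ℝ × E3) : ℝ := fderiv ℝ Φ z (1, 0)
/-- Spatial derivatives on space-time. -/
def PP (Φ : ℝ × E3 → ℝ) (i : Fin 3) (z : ℝ × E3) : ℝ := fderiv ℝ Φ z (0, bv i)
/-- Energy density. -/
def en (H : ℝ) (f : ℝ → ℝ) (Φ : ℝ × E3 → ℝ) (z : ℝ × E3) : ℝ :=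
  (QQ Φ z) ^ 2 / 2 + Real.exp (-2 * H * z.1) * (∑ i, (PP Φ i z) ^ 2) / 2 + pot f (Φ z)
/-- Radius of the backward cone. -/
def rho (H T t : ℝ) : ℝ := (Real.exp (-H * t) - Real.exp (-H * T)) / H + 1
/-- Cutoff. -/
def psi (H T : ℝ) (x0 : E3) (z : ℝ × E3) : ℝ :=
  expNegInvGlue ((rho H T z.1) ^ 2 - ‖z.2 - x0‖ ^ 2)

lemma contDiff_QQ {Φ : ℝ × E3 → ℝ} (h : ContDiff ℝ 2 Φ) : ContDiff ℝ 1 (QQ Φ) :=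
  (h.fderiv_right (m := 1) (by norm_num)).clm_apply contDiff_const

lemma contDiff_PP {Φ : ℝ × E3 → ℝ} (h : ContDiff ℝ 2 Φ) (i : Fin 3) : ContDiff ℝ 1 (PP Φ i) :=
  (h.fderiv_right (m := 1) (by norm_num)).clm_apply contDiff_const

lemma contDiff_en {H : ℝ} {f : ℝ → ℝ} (hf : Continuous f) {Φ : ℝ × E3 → ℝ} (h : ContDiff ℝ 2 Φ) :
    ContDiff ℝ 1 (en H f Φ) := by
  have h1 := contDiff_QQ h
  have h2 := contDiff_PP h
  have h3 := (contDiff_pot hf).comp (h.of_le (by norm_num : (1 : WithTop ℕ∞) ≤ 2))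
  have h4 : ContDiff ℝ 1 (fun z : ℝ × E3 => Real.exp (-2 * H * z.1)) := by fun_prop
  have h5 : ContDiff ℝ 1 (fun z : ℝ × E3 => ∑ i, (PP Φ i z) ^ 2) :=
    ContDiff.sum fun i _ => (h2 i).pow 2
  exact (((h1.pow 2).div_const 2).add ((h4.mul h5).div_const 2)).add h3

lemma contDiff_rho (H T : ℝ) : ContDiff ℝ 1 (rho H T) := by
  unfold rho; fun_prop

lemma contDiff_psi (H T : ℝ) (x0 : E3) : ContDiff ℝ 1 (psi H T x0) := by
  have h1 : ContDiff ℝ 1 expNegInvGlue := expNegInvGlue.contDiff (n := 1)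
  have h2 : ContDiff ℝ 1 (fun z : ℝ × E3 => (rho H T z.1) ^ 2 - ‖z.2 - x0‖ ^ 2) :=
    (((contDiff_rho H T).comp contDiff_fst).pow 2).sub ((contDiff_snd.sub contDiff_const).norm_sq ℝ)
  exact h1.comp h2

lemma symm_QP {Φ : ℝ × E3 → ℝ} (h : ContDiff ℝ 2 Φ) (i : Fin 3) (z : ℝ × E3) :
    fderiv ℝ (PP Φ i) z (1, 0) = fderiv ℝ (QQ Φ) z (0, bv i) := by
  have hs : IsSymmSndFDerivAt ℝ Φ z := h.contDiffAt.isSymmSndFDerivAt (by simp)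
  have hd : DifferentiableAt ℝ (fderiv ℝ Φ) z :=
    (h.fderiv_right (m := 1) (by norm_num)).differentiable one_ne_zero z
  have e1 : ∀ v w : ℝ × E3, fderiv ℝ (fun y => fderiv ℝ Φ y v) z w
      = fderiv ℝ (fderiv ℝ Φ) z w v := by
    intro v w
    rw [fderiv_clm_apply hd (differentiableAt_const v)]
    simp
  unfold PP QQ
  rw [e1, e1]
  exact hs _ _

lemma en_deriv {H : ℝ} {f : ℝ → ℝ} (hf : Continuous f) {Φ : ℝ × E3 → ℝ} (h : ContDiff ℝ 2 Φ)
    (t : ℝ) (x : E3) :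
    fderiv ℝ (en H f Φ) (t, x) (1, 0) = QQ Φ (t, x) * fderiv ℝ (QQ Φ) (t, x) (1, 0)
      + Real.exp (-2 * H * t) * ∑ i, PP Φ i (t, x) * fderiv ℝ (QQ Φ) (t, x) (0, bv i)
      - H * Real.exp (-2 * H * t) * ∑ i, PP Φ i (t, x) ^ 2 + f (Φ (t, x)) * QQ Φ (t, x) := by
  have h1 := hasDerivAt_slice (contDiff_en (H := H) hf h) t x
  have hQ := hasDerivAt_slice (contDiff_QQ h) t x
  have hP := fun i => hasDerivAt_slice (contDiff_PP h i) t x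
  have hΦ := hasDerivAt_slice (h.of_le (by norm_num : (1 : WithTop ℕ∞) ≤ 2)) t x
  have hF := (hasDerivAt_pot hf (Φ (t, x))).comp t hΦ
  have hE : HasDerivAt (fun s : ℝ => Real.exp (-2 * H * s))
      (Real.exp (-2 * H * t) * (-2 * H)) t := by
    simpa using ((hasDerivAt_id t).const_mul (-2 * H)).exp
  have hS := HasDerivAt.fun_sum (u := Finset.univ) (fun i _ => (hP i).fun_pow 2)
  have h2 := (((hQ.fun_pow 2).div_const 2).fun_add ((hE.fun_mul hS).div_const 2)).fun_add hF
  rw [h1.unique h2]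
  simp only [symm_QP h, Fin.sum_univ_three]
  have : fderiv ℝ Φ (t, x) (1, 0) = QQ Φ (t, x) := rfl
  rw [this]
  norm_num
  ring

lemma hasDerivAt_rho {H : ℝ} (hH : 0 < H) (T t : ℝ) :
    HasDerivAt (rho H T) (-Real.exp (-H * t)) t := by
  have hE : HasDerivAt (fun s : ℝ => Real.exp (-H * s))
      (Real.exp (-H * t) * (-H)) t := by
    simpa using ((hasDerivAt_id t).const_mul (-H)).exp
  have := ((hE.sub_const (Real.exp (-H * T))).div_const H).add_const 1
  have e : -Real.exp (-H * t) = Real.exp (-H * t) * (-H) / H := by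
    rw [mul_div_assoc, neg_div, div_self hH.ne']; ring
  rw [e]
  exact this

lemma psi_derivs {H : ℝ} (hH : 0 < H) (T : ℝ) (x0 : E3) (t : ℝ) (x : E3) :
    ∃ κ : ℝ, 0 ≤ κ ∧ ((rho H T t) ^ 2 < ‖x - x0‖ ^ 2 → κ = 0) ∧
      fderiv ℝ (psi H T x0) (t, x) (1, 0) = -(2 * κ * rho H T t * Real.exp (-H * t)) ∧
      ∀ i, fderiv ℝ (psi H T x0) (t, x) (0, bv i) = -(2 * κ * (x - x0) i) := by
  have hχ : HasDerivAt expNegInvGlue (deriv expNegInvGlue ((rho H T t) ^ 2 - ‖x - x0‖ ^ 2))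
      ((rho H T t) ^ 2 - ‖x - x0‖ ^ 2) :=
    (((expNegInvGlue.contDiff (n := 1)).differentiable one_ne_zero) _).hasDerivAt
  refine ⟨deriv expNegInvGlue ((rho H T t) ^ 2 - ‖x - x0‖ ^ 2), ?_, ?_, ?_, ?_⟩
  · exact expNegInvGlue.monotone.deriv_nonneg
  · intro hlt
    have : expNegInvGlue =ᶠ[nhds ((rho H T t) ^ 2 - ‖x - x0‖ ^ 2)] fun _ => 0 := by
      filter_upwards [Iio_mem_nhds (sub_neg.2 hlt)] with s hs
      exact expNegInvGlue.zero_of_nonpos (le_of_lt hs)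
    rw [this.deriv_eq]; simp
  · have h1 := hasDerivAt_slice (contDiff_psi H T x0) t x
    have h2 := hχ.comp t (((hasDerivAt_rho hH T t).fun_pow 2).sub_const (‖x - x0‖ ^ 2))
    rw [h1.unique h2]
    norm_num
    ring
  · intro i
    rw [← fderiv_slice (contDiff_psi H T x0)]
    have h3 : HasFDerivAt (fun y : E3 => ‖y - x0‖ ^ 2) (2 • innerSL ℝ (x - x0)) x := by
      simpa using ((hasFDerivAt_id x).sub_const x0).norm_sq
    have h2 := hχ.comp_hasFDerivAt x (h3.const_sub ((rho H T t) ^ 2))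
    have h4 : HasFDerivAt (fun y => psi H T x0 (t, y)) _ x := h2
    rw [h4.fderiv]
    simp [EuclideanSpace.inner_single_right]
    ring

lemma rho_pos {H : ℝ} (hH : 0 < H) {T t : ℝ} (h : t ≤ T) : 0 < rho H T t := by
  unfold rho
  have : Real.exp (-H * T) ≤ Real.exp (-H * t) := Real.exp_le_exp.2 (by nlinarith)
  have : 0 ≤ (Real.exp (-H * t) - Real.exp (-H * T)) / H := div_nonneg (by linarith) hH.le
  linarith

lemma rho_le {H : ℝ} (hH : 0 < H) {T t : ℝ} (h : 0 ≤ t) : rho H T t ≤ 1 / H + 1 := by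
  unfold rho
  have h1 : Real.exp (-H * t) ≤ 1 := Real.exp_le_one_iff.2 (by nlinarith)
  have h2 := Real.exp_pos (-H * T)
  have : (Real.exp (-H * t) - Real.exp (-H * T)) / H ≤ 1 / H := by gcongr; linarith
  linarith

lemma en_lower {H : ℝ} {f : ℝ → ℝ} (hF : ∀ s, 0 ≤ pot f s) (Φ : ℝ × E3 → ℝ) (z : ℝ × E3) :
    0 ≤ en H f Φ z := by
  unfold en
  have := hF (Φ z)
  positivity

lemma pointwise {a ρ κ ψ q F H : ℝ} {p y qi pii : Fin 3 → ℝ} {qt ff : ℝ}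
    (ha : 0 < a) (hρ : 0 < ρ) (hκ : 0 ≤ κ) (hκ0 : ρ ^ 2 < ∑ i, y i ^ 2 → κ = 0)
    (hψ : 0 ≤ ψ) (hF : 0 ≤ F) (hH : 0 < H)
    (heq : qt + 3 * H * q - a ^ 2 * ∑ i, pii i + ff = 0) :
    -(2 * κ * ρ * a) * (q ^ 2 / 2 + a ^ 2 * (∑ i, p i ^ 2) / 2 + F)
      + ψ * (q * qt + a ^ 2 * ∑ i, p i * qi i - H * a ^ 2 * ∑ i, p i ^ 2 + ff * q)
    ≤ a ^ 2 * ∑ i, (-(2 * κ * y i) * (q * p i) + ψ * (qi i * p i + q * pii i)) := by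
  have hq : qt = -3 * H * q + a ^ 2 * ∑ i, pii i - ff := by linarith
  have hS : (∑ i, (-(2 * κ * y i) * (q * p i) + ψ * (qi i * p i + q * pii i)))
      = -2 * κ * q * (∑ i, y i * p i) + ψ * (∑ i, p i * qi i + q * ∑ i, pii i) := by
    simp only [Fin.sum_univ_three]; ring
  have hCS : (∑ i, y i * p i) ^ 2 ≤ (∑ i, y i ^ 2) * ∑ i, p i ^ 2 :=
    Finset.sum_mul_sq_le_sq_mul_sq _ _ _
  have hP : 0 ≤ ∑ i, p i ^ 2 := by positivity
  rw [hS, hq]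
  generalize (∑ i, y i * p i) = S at *
  generalize (∑ i, p i ^ 2) = N at *
  generalize (∑ i, y i ^ 2) = Y at *
  generalize (∑ i, p i * qi i) = R at *
  generalize (∑ i, pii i) = L at *
  have key : 0 ≤ κ * (ρ * (q ^ 2 / 2 + a ^ 2 * N / 2) - a * q * S) := by
    by_cases h : ρ ^ 2 < Y
    · rw [hκ0 h]; simp
    · push Not at h
      apply mul_nonneg hκ
      have h1 : S ^ 2 ≤ ρ ^ 2 * N := hCS.trans (by gcongr)
      have h2 : 0 ≤ (ρ * q - a * S) ^ 2 := sq_nonneg _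
      have h3 : a ^ 2 * S ^ 2 ≤ a ^ 2 * (ρ ^ 2 * N) := by gcongr
      have h4 : 0 ≤ ρ * (ρ * (q ^ 2 / 2 + a ^ 2 * N / 2) - a * q * S) := by nlinarith
      exact nonneg_of_mul_nonneg_right h4 hρ
  have k1 : 0 ≤ 2 * a * (κ * (ρ * (q ^ 2 / 2 + a ^ 2 * N / 2) - a * q * S)) := by positivity
  have k2 : 0 ≤ 2 * κ * ρ * a * F := by positivity
  have k3 : 0 ≤ ψ * (3 * H * q ^ 2) := by positivity
  have k4 : 0 ≤ ψ * (H * a ^ 2 * N) := by positivity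
  linarith

lemma psi_zero {H T : ℝ} {x0 : E3} {t : ℝ} {x : E3} {C : ℝ} (hC : |rho H T t| ≤ C)
    (hx : x ∉ Metric.closedBall x0 C) : psi H T x0 (t, x) = 0 := by
  unfold psi
  apply expNegInvGlue.zero_of_nonpos
  rw [Metric.mem_closedBall, dist_eq_norm, not_le] at hx
  have : (rho H T t) ^ 2 ≤ ‖x - x0‖ ^ 2 := by
    rw [← sq_abs (rho H T t)]
    have := abs_nonneg (rho H T t)
    gcongr
    linarith
  simpa using this

lemma cone_zero {H : ℝ} (hH : 0 < H) {f : ℝ → ℝ} (hf : Continuous f)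
    (hF : ∀ s, 0 ≤ pot f s) {Φ : ℝ × E3 → ℝ} (h : ContDiff ℝ 2 Φ)
    (heq : ∀ t : ℝ, 0 ≤ t → ∀ x : E3, fderiv ℝ (QQ Φ) (t, x) (1, 0) + 3 * H * QQ Φ (t, x)
      - Real.exp (-2 * H * t) * ∑ i, fderiv ℝ (PP Φ i) (t, x) (0, bv i) + f (Φ (t, x)) = 0)
    {t0 T R : ℝ} (ht0 : 0 ≤ t0) (hT : t0 ≤ T)
    (h0 : ∀ x : E3, R < ‖x‖ → en H f Φ (t0, x) = 0) {x0 : E3} (hx0 : R + (1 / H + 1) < ‖x0‖) :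
    en H f Φ (T, x0) = 0 := by
  set G : ℝ × E3 → ℝ := fun z => psi H T x0 z * en H f Φ z with hG
  have hψC := contDiff_psi H T x0
  have heC := contDiff_en (H := H) hf h
  have hGC : ContDiff ℝ 1 G := hψC.mul heC
  have hψ0 : ∀ z, 0 ≤ psi H T x0 z := fun z => expNegInvGlue.nonneg _
  have hloc : ∀ t : ℝ, ∃ C : ℝ, ∀ s ∈ Set.Icc (t - 1) (t + 1), |rho H T s| ≤ C := by
    intro t
    obtain ⟨C, hC⟩ := (isCompact_Icc (a := t - 1) (b := t + 1)).exists_bound_of_continuousOn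
      (contDiff_rho H T).continuous.continuousOn
    exact ⟨C, fun s hs => hC s hs⟩
  have hder : ∀ t : ℝ, Integrable (fun x => fderiv ℝ G (t, x) (1, 0)) ∧
      HasDerivAt (fun s => ∫ x, G (s, x)) (∫ x, fderiv ℝ G (t, x) (1, 0)) t := by
    intro t
    obtain ⟨C, hC⟩ := hloc t
    refine hasDerivAt_param hGC (isCompact_closedBall x0 C) t ?_
    intro s hs x hx
    simp only [hG]
    rw [psi_zero (hC s ⟨hs.1.le, hs.2.le⟩) hx, zero_mul]
  have hneg : ∀ t : ℝ, 0 ≤ t → t ≤ T → ∫ x, fderiv ℝ G (t, x) (1, 0) ≤ 0 := by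
    intro t ht htT
    have hin : ContDiff ℝ 1 (fun x : E3 => (t, x)) := by fun_prop
    set W : Fin 3 → E3 → ℝ := fun i x => psi H T x0 (t, x) * (QQ Φ (t, x) * PP Φ i (t, x)) with hW
    have hWC : ∀ i, ContDiff ℝ 1 (W i) := fun i =>
      (hψC.comp hin).mul (((contDiff_QQ h).comp hin).mul ((contDiff_PP h i).comp hin))
    have hWs : ∀ i, HasCompactSupport (W i) := by
      intro i
      refine HasCompactSupport.intro (isCompact_closedBall x0 |rho H T t|) fun x hx => ?_
      simp only [hW]
      rw [psi_zero le_rfl hx, zero_mul]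
    have hWI : ∀ i, Integrable (fun x => fderiv ℝ (W i) x (bv i)) := by
      intro i
      apply Continuous.integrable_of_hasCompactSupport
      · exact ((hWC i).continuous_fderiv one_ne_zero).clm_apply continuous_const
      · exact (hWs i).fderiv_apply (𝕜 := ℝ) _
    have hz : ∫ x, Real.exp (-2 * H * t) * ∑ i, fderiv ℝ (W i) x (bv i) = 0 := by
      rw [integral_const_mul, integral_finsetSum _ (fun i _ => hWI i)]
      simp [integral_deriv_zero (hWC _) (hWs _)]
    rw [← hz]
    apply integral_mono (hder t).1 ((integrable_finsetSum _ (fun i _ => hWI i)).const_mul _)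
    intro x
    have e1 : fderiv ℝ G (t, x) (1, 0) = fderiv ℝ (psi H T x0) (t, x) (1, 0) * en H f Φ (t, x)
        + psi H T x0 (t, x) * fderiv ℝ (en H f Φ) (t, x) (1, 0) :=
      (hasDerivAt_slice hGC t x).unique
        ((hasDerivAt_slice hψC t x).fun_mul (hasDerivAt_slice heC t x))
    have e2 : ∀ i, fderiv ℝ (W i) x (bv i) =
        fderiv ℝ (psi H T x0) (t, x) (0, bv i) * (QQ Φ (t, x) * PP Φ i (t, x))
        + psi H T x0 (t, x) * (fderiv ℝ (QQ Φ) (t, x) (0, bv i) * PP Φ i (t, x)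
          + QQ Φ (t, x) * fderiv ℝ (PP Φ i) (t, x) (0, bv i)) := by
      intro i
      have := (hasFDerivAt_slice hψC t x).fun_mul ((hasFDerivAt_slice (contDiff_QQ h) t x).fun_mul
        (hasFDerivAt_slice (contDiff_PP h i) t x))
      have h4 : HasFDerivAt (W i) _ x := this
      rw [h4.fderiv]
      simp
      ring
    obtain ⟨κ, hκ, hκ0, hpt, hpx⟩ := psi_derivs hH T x0 t x
    have ea : Real.exp (-2 * H * t) = Real.exp (-H * t) ^ 2 := by
      rw [← Real.exp_nat_mul]; congr 1; push_cast; ring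
    simp only [e2, e1, en_deriv hf h, hpt, hpx]
    have hq := heq t ht x
    unfold en
    simp only [ea] at hq ⊢
    refine pointwise (Real.exp_pos _) (rho_pos hH htT) hκ ?_ (hψ0 _) (hF _) hH hq
    rw [EuclideanSpace.real_norm_sq_eq] at hκ0
    exact hκ0
  have hanti : AntitoneOn (fun s => ∫ x, G (s, x)) (Set.Icc t0 T) := by
    apply antitoneOn_of_deriv_nonpos (convex_Icc _ _)
    · exact fun s _ => (hder s).2.continuousAt.continuousWithinAt
    · exact fun s _ => (hder s).2.differentiableAt.differentiableWithinAt
    · intro s hs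
      rw [interior_Icc] at hs
      rw [(hder s).2.deriv]
      exact hneg s (by linarith [hs.1]) hs.2.le
  have hA0 : ∫ x, G (t0, x) = 0 := by
    have : ∀ x, G (t0, x) = 0 := by
      intro x
      by_cases hx : x ∈ Metric.closedBall x0 |rho H T t0|
      · simp only [hG]
        rw [h0 x, mul_zero]
        rw [Metric.mem_closedBall, dist_eq_norm, abs_of_pos (rho_pos hH hT)] at hx
        have h1 := rho_le (T := T) hH ht0
        have h2 : ‖x0‖ ≤ ‖x‖ + ‖x - x0‖ := by
          have := norm_sub_norm_le x0 x
          rw [norm_sub_rev] at this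
          linarith
        linarith
      · simp only [hG]
        rw [psi_zero le_rfl hx, zero_mul]
    simp [this]
  have hAT : ∫ x, G (T, x) ≤ 0 := by
    have := hanti (Set.left_mem_Icc.2 hT) (Set.right_mem_Icc.2 hT) hT
    simp only [hA0] at this
    exact this
  have hGT : G (T, x0) = 0 := by
    by_contra hne
    have : 0 < ∫ x, G (T, x) := by
      apply Continuous.integral_pos_of_hasCompactSupport_nonneg_nonzero (x := x0)
      · exact hGC.continuous.comp (by fun_prop : Continuous fun x : E3 => (T, x))
      · refine HasCompactSupport.intro (isCompact_closedBall x0 |rho H T T|) fun x hx => ?_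
        simp only [hG]
        rw [psi_zero le_rfl hx, zero_mul]
      · exact fun x => mul_nonneg (hψ0 _) (en_lower hF _ _)
      · exact hne
    linarith
  have hpos : 0 < psi H T x0 (T, x0) := by
    unfold psi
    apply expNegInvGlue.pos_of_pos
    simp [rho]
  exact (mul_eq_zero.1 hGT).resolve_left hpos.ne'

lemma exists_t0 {H : ℝ} {f : ℝ → ℝ} {φ : ℝ → E3 → ℝ}
    (hreg : ContDiff ℝ 2 (Function.uncurry φ)) (hsupp : ∀ t : ℝ, HasCompactSupport (φ t)) :
    ∃ t0 : ℝ, 0 ≤ t0 ∧ ∃ R : ℝ, ∀ x : E3, R < ‖x‖ → en H f (Function.uncurry φ) (t0, x) = 0 := by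
  set C : ℕ → Set ℝ := fun n => {s | ∀ x : E3, (n : ℝ) < ‖x‖ → φ (Real.exp s) x = 0} with hC
  have hcl : ∀ n, IsClosed (C n) := by
    intro n
    simp only [hC, Set.ofPred_forall]
    refine isClosed_iInter fun x => isClosed_iInter fun _ => ?_
    refine isClosed_eq ?_ continuous_const
    exact hreg.continuous.comp (by fun_prop : Continuous fun s : ℝ => (Real.exp s, x))
  have hU : (⋃ n, C n) = Set.univ := by
    rw [Set.eq_univ_iff_forall]
    intro s
    obtain ⟨r, hr⟩ := (hsupp (Real.exp s)).isCompact.isBounded.exists_norm_le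
    obtain ⟨n, hn⟩ := exists_nat_ge r
    refine Set.mem_iUnion.2 ⟨n, fun x hx => ?_⟩
    by_contra hne
    have := hr x (subset_tsupport _ hne)
    linarith
  obtain ⟨n, s0, hs0⟩ := nonempty_interior_of_iUnion_of_closed hcl hU
  refine ⟨Real.exp s0, (Real.exp_pos _).le, n, fun x hx => ?_⟩
  have h1 : ∀ᶠ t in nhds (Real.exp s0), ∀ y : E3, (n : ℝ) < ‖y‖ → φ t y = 0 := by
    have hlog : Tendsto Real.log (nhds (Real.exp s0)) (nhds s0) := by
      have := Real.continuousAt_log (Real.exp_ne_zero s0)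
      rwa [ContinuousAt, Real.log_exp] at this
    filter_upwards [hlog.eventually (mem_interior_iff_mem_nhds.1 hs0),
      Ioi_mem_nhds (Real.exp_pos s0)] with t ht htp
    intro y hy
    have := ht y hy
    rwa [Real.exp_log htp] at this
  have h2 : Function.uncurry φ =ᶠ[nhds (Real.exp s0, x)] fun _ => 0 := by
    have h3 : ∀ᶠ y : E3 in nhds x, (n : ℝ) < ‖y‖ :=
      (continuous_norm.tendsto x).eventually (Ioi_mem_nhds hx)
    rw [nhds_prod_eq]
    filter_upwards [h1.prod_mk h3] with z hz
    exact hz.1 z.2 hz.2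
  have h4 : fderiv ℝ (Function.uncurry φ) (Real.exp s0, x) = 0 := by
    rw [h2.fderiv_eq]; simp
  have h5 := h2.eq_of_nhds
  simp [en, QQ, PP, h4, h5, pot]

/-- For the de Sitter Klein–Gordon equation with `H > 0`, nonnegative
potential `F`, and a global radial spatially compactly supported `C²` solution, the energy
decays to zero outside the forward light cone `{|x| > (1+b)t}` for every `b > 1`. -/
theorem energy_decay_outside_lightcone
    (H : ℝ) (hH : 0 < H)
    (f : ℝ → ℝ) (hf : Continuous f) (hf0 : f 0 = 0)
    (hFpos : ∀ s : ℝ, 0 ≤ pot f s)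
    (φ : ℝ → E3 → ℝ)
    (hreg : ContDiff ℝ 2 (Function.uncurry φ))
    (heq : ∀ t : ℝ, 0 ≤ t → ∀ x : E3,
      dt2 φ t x + 3 * H * dt1 φ t x - Real.exp (-2 * H * t) * lap (φ t) x + f (φ t x) = 0)
    (hrad : ∀ t : ℝ, ∀ x y : E3, ‖x‖ = ‖y‖ → φ t x = φ t y)
    (hsupp : ∀ t : ℝ, HasCompactSupport (φ t)) :
    ∀ b : ℝ, 1 < b →
      Tendsto (fun t : ℝ => ∫ x in {x : E3 | (1 + b) * t < ‖x‖},
          ((dt1 φ t x) ^ 2 / 2 + ‖gradient (φ t) x‖ ^ 2 / (2 * Real.exp (2 * H * t))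
            + pot f (φ t x)))
        atTop (nhds 0) := by
  intro b hb
  set Φ := Function.uncurry φ with hΦ
  have h1 : ContDiff ℝ 1 Φ := hreg.of_le (by norm_num : (1 : WithTop ℕ∞) ≤ 2)
  have ed1 : ∀ t x, dt1 φ t x = QQ Φ (t, x) := fun t x => (hasDerivAt_slice h1 t x).deriv
  have ed2 : ∀ t x, dt2 φ t x = fderiv ℝ (QQ Φ) (t, x) (1, 0) := by
    intro t x
    unfold dt2
    simp only [ed1]
    exact (hasDerivAt_slice (contDiff_QQ hreg) t x).deriv
  have ep : ∀ t x i, fderiv ℝ (φ t) x (bv i) = PP Φ i (t, x) := fun t x i =>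
    fderiv_slice h1 t x (bv i)
  have el : ∀ t x, lap (φ t) x = ∑ i, fderiv ℝ (PP Φ i) (t, x) (0, bv i) := by
    intro t x
    unfold lap
    simp only [ep]
    exact Finset.sum_congr rfl fun i _ => fderiv_slice (contDiff_PP hreg i) t x (bv i)
  have eg : ∀ t x, ‖gradient (φ t) x‖ ^ 2 = ∑ i, (PP Φ i (t, x)) ^ 2 := by
    intro t x
    rw [EuclideanSpace.real_norm_sq_eq]
    refine Finset.sum_congr rfl fun i _ => ?_
    rw [← ep t x i]
    congr 1
    have : inner ℝ (gradient (φ t) x) (bv i) = fderiv ℝ (φ t) x (bv i) := by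
      simp [gradient]
    rw [← this, EuclideanSpace.inner_single_right]
    simp
  have een : ∀ t x, (dt1 φ t x) ^ 2 / 2 + ‖gradient (φ t) x‖ ^ 2 / (2 * Real.exp (2 * H * t))
            + pot f (φ t x) = en H f Φ (t, x) := by
    intro t x
    rw [ed1, eg]
    unfold en
    have : Real.exp (-2 * H * t) = (Real.exp (2 * H * t))⁻¹ := by
      rw [← Real.exp_neg]; congr 1; ring
    simp only [this]
    have : Φ (t, x) = φ t x := rfl
    rw [this]
    field_simp
  have heq' : ∀ t : ℝ, 0 ≤ t → ∀ x : E3, fderiv ℝ (QQ Φ) (t, x) (1, 0) + 3 * H * QQ Φ (t, x)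
      - Real.exp (-2 * H * t) * ∑ i, fderiv ℝ (PP Φ i) (t, x) (0, bv i) + f (Φ (t, x)) = 0 := by
    intro t ht x
    rw [← ed2, ← ed1, ← el]
    exact heq t ht x
  obtain ⟨t0, ht0, R, hR⟩ := exists_t0 (H := H) (f := f) hreg hsupp
  refine tendsto_const_nhds.congr' ?_
  filter_upwards [eventually_ge_atTop t0, eventually_ge_atTop (R + (1 / H + 1)),
    eventually_ge_atTop 0] with t h2 h3 h4
  symm
  apply setIntegral_eq_zero_of_forall_eq_zero
  intro x hx
  rw [een]
  refine cone_zero hH hf hFpos hreg heq' ht0 h2 hR (lt_of_le_of_lt ?_ hx)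
  nlinarith

end
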